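/- Let z(s) : [a,b] → ℂ be an arc-length parametrization of a Dini-smooth Jordan arc γ. For every ε > 0 there exists δ > 0 such that for every point ζ ∈ ℂ ∖ γ and every interval I ⊂ [a,b] of length |I| < δ, the total variation over I of any continuous branch of the argument s ↦ arg(z(s) − ζ) is at most π + ε. -/

import Mathlib

open Filter Topology MeasureTheory Set

noncomputable section

/-- The supremum norm of `f` over the set `Γ`. -/
def supNorm (Γ : Set ℂ) (f : ℂ → ℂ) : ℝ := sSup ((fun z => ‖f z‖) '' Γ)

/-- `Γ` is a Jordan curve: the image of a continuous `2π`-periodic map `ℝ → ℂ` that is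
injective modulo the period. -/
def IsJordanCurve (Γ : Set ℂ) : Prop :=
  ∃ f : ℝ → ℂ, Continuous f ∧ Function.Periodic f (2 * Real.pi) ∧
    (∀ s t : ℝ, f s = f t → ∃ n : ℤ, t - s = n * (2 * Real.pi)) ∧
    Γ = Set.range f

/-- The modulus of continuity of `g` on the interval `[a, b]`, evaluated at `t`. -/
def modCont (g : ℝ → ℂ) (a b t : ℝ) : ℝ :=
  sSup {d : ℝ | ∃ s₁ ∈ Set.Icc a b, ∃ s₂ ∈ Set.Icc a b, |s₁ - s₂| ≤ t ∧ d = ‖g s₁ - g s₂‖}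

/-- `γ`, with derivative `γ'`, parametrizes a Dini-smooth Jordan arc on `[a, b]`:
`γ'` is continuous and nonvanishing on `[a, b]` and its modulus of continuity `ω`
satisfies `∫₀¹ ω(t)/t dt < ∞`. -/
structure IsDiniSmoothArc (γ γ' : ℝ → ℂ) (a b : ℝ) : Prop where
  lt : a < b
  inj : Set.InjOn γ (Set.Icc a b)
  deriv : ∀ s ∈ Set.Icc a b, HasDerivWithinAt γ (γ' s) (Set.Icc a b) s
  cont : ContinuousOn γ' (Set.Icc a b)
  nonzero : ∀ s ∈ Set.Icc a b, γ' s ≠ 0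
  dini : MeasureTheory.IntegrableOn (fun t => modCont γ' a b t / t) (Set.Ioc (0 : ℝ) 1)

/-- A piecewise Dini-smooth Jordan curve: a Jordan curve which is the union of finitely many
Dini-smooth arcs. -/
def IsPiecewiseDiniSmoothJordanCurve (Γ : Set ℂ) : Prop :=
  IsJordanCurve Γ ∧
    ∃ (N : ℕ) (γ γ' : Fin N → ℝ → ℂ) (a b : Fin N → ℝ),
      (∀ i, IsDiniSmoothArc (γ i) (γ' i) (a i) (b i)) ∧
      Γ = ⋃ i, γ i '' Set.Icc (a i) (b i)

/-- The unbounded connected component `Ω` of the complement of `Γ` (in the finite plane). -/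
def exteriorDomain (Γ : Set ℂ) : Set ℂ :=
  {z | z ∈ Γᶜ ∧ ¬ Bornology.IsBounded (connectedComponentIn Γᶜ z)}

/-- `φ` is the canonical exterior conformal map of `Γ` onto `{|w| > 1}` with `φ(∞) = ∞` and
`φ(z)/z → c⁻¹` as `z → ∞`; the constant `c` is then the logarithmic capacity of `Γ`. -/
structure IsExteriorMap (Γ : Set ℂ) (φ : ℂ → ℂ) (c : ℝ) : Prop where
  cpos : 0 < c
  diff : DifferentiableOn ℂ φ (exteriorDomain Γ)
  bij : Set.BijOn φ (exteriorDomain Γ) {w : ℂ | 1 < ‖w‖}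
  tendsto : Filter.Tendsto (fun z => φ z / z)
    (Bornology.cobounded ℂ ⊓ Filter.principal (exteriorDomain Γ)) (nhds ((c : ℂ)⁻¹))

/-- `F` is the `n`-th Faber polynomial of `Γ`: the unique polynomial with
`φ(z)^n − F(z) → 0` as `z → ∞` in the exterior domain. -/
def IsFaberPoly (Γ : Set ℂ) (φ : ℂ → ℂ) (n : ℕ) (F : Polynomial ℂ) : Prop :=
  Filter.Tendsto (fun z => φ z ^ n - F.eval z)
    (Bornology.cobounded ℂ ⊓ Filter.principal (exteriorDomain Γ)) (nhds 0)

/-- `ψ` is the inverse of `φ`, extended to a homeomorphism of `{|w| ≥ 1}` onto the closure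
of the exterior domain; on the unit circle it parametrizes `Γ`. -/
structure IsExteriorParam (Γ : Set ℂ) (φ ψ : ℂ → ℂ) : Prop where
  cont : ContinuousOn ψ {w : ℂ | 1 ≤ ‖w‖}
  inj : Set.InjOn ψ {w : ℂ | 1 ≤ ‖w‖}
  inv : ∀ w : ℂ, 1 < ‖w‖ → ψ w ∈ exteriorDomain Γ ∧ φ (ψ w) = w
  boundary : ∀ w : ℂ, ‖w‖ = 1 → ψ w ∈ Γ
  boundary_surj : ∀ z ∈ Γ, ∃ w : ℂ, ‖w‖ = 1 ∧ ψ w = z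

/-- `T` is the `n`-th Chebyshev polynomial of `Γ`: the monic polynomial of degree `n`
minimizing the supremum norm over `Γ`. -/
def IsChebyshevPoly (Γ : Set ℂ) (n : ℕ) (T : Polynomial ℂ) : Prop :=
  T.Monic ∧ T.natDegree = n ∧
    ∀ P : Polynomial ℂ, P.Monic → P.natDegree = n →
      supNorm Γ (fun z => T.eval z) ≤ supNorm Γ (fun z => P.eval z)

/-- `v` is a secant-argument function of `Γ = ψ(unit circle)` at `θ` (relative to `α` with
`α < θ < α + 2π`): a bounded-variation branch of `t ↦ arg (ψ(e^{it}) − ψ(e^{iθ}))` on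
`[α, α + 2π]`, continuous on `[α, θ)` and on `(θ, α + 2π]`, normalized by `v θ = v(θ+)`
and by requiring the jump `v(θ+) − v(θ−)` to lie in `[0, 2π]`. -/
structure IsSecantArg (ψ : ℂ → ℂ) (θ α : ℝ) (v : ℝ → ℝ) : Prop where
  hα : α < θ
  hθ : θ < α + 2 * Real.pi
  bv : BoundedVariationOn v (Set.Icc α (α + 2 * Real.pi))
  contBefore : ContinuousOn v (Set.Ico α θ)
  contAfter : ContinuousOn v (Set.Ioc θ (α + 2 * Real.pi))
  rightCont : ContinuousWithinAt v (Set.Ici θ) θ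
  jump_mem : ∃ L : ℝ, Filter.Tendsto v (nhdsWithin θ (Set.Iio θ)) (nhds L) ∧
    v θ - L ∈ Set.Icc 0 (2 * Real.pi)
  branch : ∀ t ∈ Set.Icc α (α + 2 * Real.pi), t ≠ θ →
    Complex.exp (Complex.I * (v t : ℂ))
      = (ψ (Complex.exp (Complex.I * (t : ℂ))) - ψ (Complex.exp (Complex.I * (θ : ℂ))))
        / ((‖ψ (Complex.exp (Complex.I * (t : ℂ))) - ψ (Complex.exp (Complex.I * (θ : ℂ)))‖ : ℂ))

/-- The exterior angle of `Γ = ψ(unit circle)` at the boundary point `ψ(e^{iθ})` equals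
`lam * π`, expressed through the jump `v(θ+) − v(θ−) = lam * π` of a secant-argument
function at `θ`. -/
def HasExteriorAngleAt (ψ : ℂ → ℂ) (θ lam : ℝ) : Prop :=
  ∃ (α : ℝ) (v : ℝ → ℝ), IsSecantArg ψ θ α v ∧
    Filter.Tendsto v (nhdsWithin θ (Set.Iio θ)) (nhds (v θ - lam * Real.pi))

/-- The set `Θ_Γ = {θ_k + 2πj}` of corner parameters modulo `2π`. -/
def cornerSet {l : ℕ} (θk : Fin l → ℝ) : Set ℝ :=
  {x | ∃ (k : Fin l) (j : ℤ), x = θk k + j * (2 * Real.pi)}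

/-- `(μp, μn)` realizes the Lebesgue–Stieltjes (signed) measure `dv` of `v` on `(α, β]`:
both are finite measures and `μp − μn` has the increments of `v`. -/
structure IsLSPair (v : ℝ → ℝ) (α β : ℝ) (μp μn : MeasureTheory.Measure ℝ) : Prop where
  finp : MeasureTheory.IsFiniteMeasure μp
  finn : MeasureTheory.IsFiniteMeasure μn
  incr : ∀ s t : ℝ, α ≤ s → s ≤ t → t ≤ β →
    (μp (Set.Ioc s t)).toReal - (μn (Set.Ioc s t)).toReal = v t - v s

lemma modCont_nonneg (g : ℝ → ℂ) (a b t : ℝ) : 0 ≤ modCont g a b t := by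
  refine Real.sSup_nonneg ?_
  rintro d ⟨s₁, -, s₂, -, -, rfl⟩
  exact norm_nonneg _

lemma norm_sub_le_modCont {g : ℝ → ℂ} {a b t K : ℝ} (hK : ∀ s ∈ Icc a b, ‖g s‖ ≤ K)
    {s₁ s₂ : ℝ} (h₁ : s₁ ∈ Icc a b) (h₂ : s₂ ∈ Icc a b) (h : |s₁ - s₂| ≤ t) :
    ‖g s₁ - g s₂‖ ≤ modCont g a b t := by
  refine le_csSup ⟨K + K, ?_⟩ ⟨s₁, h₁, s₂, h₂, h, rfl⟩
  rintro d ⟨x, hx, y, hy, -, rfl⟩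
  exact (norm_sub_le _ _).trans (add_le_add (hK x hx) (hK y hy))

lemma exists_modCont_le {g : ℝ → ℂ} {a b : ℝ} (hg : ContinuousOn g (Icc a b)) {η : ℝ}
    (hη : 0 < η) : ∃ δ > 0, ∀ t ≤ δ, modCont g a b t ≤ η := by
  have hu := isCompact_Icc.uniformContinuousOn_of_continuous hg
  obtain ⟨δ, hδ, h⟩ := Metric.uniformContinuousOn_iff.1 hu η hη
  refine ⟨δ / 2, by positivity, fun t ht => Real.sSup_le ?_ hη.le⟩
  rintro d ⟨x, hx, y, hy, hxy, rfl⟩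
  rw [← dist_eq_norm]
  refine (h x hx y hy ?_).le
  rw [Real.dist_eq]
  linarith

lemma norm_taylor_le_modCont {f f' : ℝ → ℂ} {a b K : ℝ}
    (hf : ∀ s ∈ Icc a b, HasDerivWithinAt f (f' s) (Icc a b) s)
    (hK : ∀ s ∈ Icc a b, ‖f' s‖ ≤ K) {s₀ s : ℝ} (h₀ : s₀ ∈ Icc a b) (hs : s ∈ Icc a b) :
    ‖f s - (f s₀ + (s - s₀ : ℝ) * f' s₀)‖ ≤ modCont f' a b |s - s₀| * |s - s₀| := by
  have hsub : uIcc s₀ s ⊆ Icc a b := ordConnected_Icc.uIcc_subset h₀ hs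
  have hd : ∀ x ∈ uIcc s₀ s,
      HasDerivWithinAt (fun x => f x - (x : ℂ) * f' s₀) (f' x - f' s₀) (uIcc s₀ s) x := by
    intro x hx
    have h1 := (hf x (hsub hx)).mono hsub
    have h2 := ((Complex.ofRealCLM.hasDerivAt (x := x)).mul_const (f' s₀)).hasDerivWithinAt
      (s := uIcc s₀ s)
    simpa using! h1.sub h2
  have hb : ∀ x ∈ uIcc s₀ s, ‖f' x - f' s₀‖ ≤ modCont f' a b |s - s₀| := fun x hx =>
    norm_sub_le_modCont hK (hsub hx) h₀ (abs_sub_left_of_mem_uIcc hx)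
  have := (convex_uIcc s₀ s).norm_image_sub_le_of_norm_hasDerivWithin_le hd hb
    left_mem_uIcc right_mem_uIcc
  rw [Real.norm_eq_abs] at this
  have e : f s - (f s₀ + (s - s₀ : ℝ) * f' s₀) =
      f s - (s : ℂ) * f' s₀ - (f s₀ - (s₀ : ℂ) * f' s₀) := by
    push_cast
    ring
  rwa [e]

lemma hasDerivWithinAt_of_exp_eq {f : ℝ → ℂ} {A : ℝ → ℝ} {S : Set ℝ} {s : ℝ} {f' : ℂ}
    (hf : HasDerivWithinAt f f' S s) (hne : ∀ x ∈ S, f x ≠ 0) (hs : s ∈ S)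
    (hA : ContinuousWithinAt A S s)
    (hexp : ∀ x ∈ S, Complex.exp (Complex.I * (A x : ℂ)) = f x / ((‖f x‖ : ℝ) : ℂ)) :
    HasDerivWithinAt A (f' / f s).im S s := by
  have hlog : HasDerivWithinAt (fun x => A s + (Complex.log (f x / f s)).im)
      (f' / f s).im S s := by
    have h1 := (hf.div_const (f s)).clog_real
      (by rw [div_self (hne s hs)]; exact Complex.one_mem_slitPlane)
    rw [div_self (hne s hs), div_one] at h1
    simpa using! (Complex.imCLM.hasFDerivAt.comp_hasDerivWithinAt s h1).const_add (A s)
  refine hlog.congr_of_eventuallyEq ?_ ?_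
  · have hnear : ∀ᶠ x in 𝓝[S] s, dist (A x) (A s) < Real.pi :=
      (Metric.tendsto_nhds.1 hA) _ Real.pi_pos
    filter_upwards [hnear, self_mem_nhdsWithin] with x hx hxS
    have hr : 0 < ‖f x‖ / ‖f s‖ :=
      div_pos (norm_pos_iff.2 (hne x hxS)) (norm_pos_iff.2 (hne s hs))
    have key : f x / f s = ((‖f x‖ / ‖f s‖ : ℝ) : ℂ) *
        Complex.exp (((A x - A s : ℝ) : ℂ) * Complex.I) := by
      have h0 : ((‖f x‖ : ℝ) : ℂ) ≠ 0 := by simpa using hne x hxS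
      have h0' : ((‖f s‖ : ℝ) : ℂ) ≠ 0 := by simpa using hne s hs
      have h1 := hne s hs
      have e : (((A x - A s : ℝ) : ℂ) * Complex.I) = Complex.I * A x - Complex.I * A s := by
        push_cast; ring
      rw [e, Complex.exp_sub, hexp x hxS, hexp s hs]
      push_cast
      field_simp
    rw [Real.dist_eq, abs_lt] at hx
    rw [Complex.log_im, key, Complex.arg_real_mul _ hr, Complex.exp_mul_I,
      Complex.arg_cos_add_sin_mul_I ⟨hx.1, hx.2.le⟩]
    ring
  · simp [div_self (hne s hs)]

lemma eVariationOn_le_of_abs_sub_le {f M : ℝ → ℝ} {c d : ℝ} (hcd : c ≤ d)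
    (h : ∀ x ∈ Icc c d, ∀ y ∈ Icc c d, x ≤ y → |f y - f x| ≤ M y - M x) :
    eVariationOn f (Icc c d) ≤ ENNReal.ofReal (M d - M c) := by
  have hM : MonotoneOn M (Icc c d) := fun x hx y hy hxy =>
    sub_nonneg.1 ((abs_nonneg _).trans (h x hx y hy hxy))
  have hle : eVariationOn f (Icc c d) ≤ eVariationOn M (Icc c d) := by
    refine iSup_mono fun p => Finset.sum_le_sum fun i _ => ?_
    rw [edist_dist, edist_dist, Real.dist_eq, Real.dist_eq]
    exact ENNReal.ofReal_le_ofReal ((h _ (p.2.2.2 i) _ (p.2.2.2 (i + 1))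
      (p.2.2.1 i.le_succ)).trans (le_abs_self _))
  have hvar := hM.eVariationOn_eq (left_mem_Icc.2 hcd) (right_mem_Icc.2 hcd)
  rw [inter_self] at hvar
  exact hle.trans hvar.le

lemma abs_sub_le_integral_of_hasDerivWithinAt {f f' φ : ℝ → ℝ} {c d : ℝ} (hcd : c ≤ d)
    (hf : ∀ x ∈ Icc c d, HasDerivWithinAt f (f' x) (Icc c d) x)
    (hφ : IntegrableOn φ (Icc c d)) (hle : ∀ x ∈ Icc c d, |f' x| ≤ φ x) :
    |f d - f c| ≤ ∫ x in c..d, φ x := by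
  have hcont : ContinuousOn f (Icc c d) := fun x hx => (hf x hx).continuousWithinAt
  have hd : ∀ x ∈ Ioo c d, HasDerivWithinAt f (f' x) (Ioi x) x := fun x hx =>
    ((hf x (Ioo_subset_Icc_self hx)).hasDerivAt (Icc_mem_nhds hx.1 hx.2)).hasDerivWithinAt
  refine abs_le'.2 ⟨?_, ?_⟩
  · exact intervalIntegral.sub_le_integral_of_hasDeriv_right_of_le hcd hcont hd hφ
      fun x hx => (le_abs_self _).trans (hle x (Ioo_subset_Icc_self hx))
  · have := intervalIntegral.sub_le_integral_of_hasDeriv_right_of_le hcd hcont.neg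
      (fun x hx => (hd x hx).neg) hφ
      fun x hx => (neg_le_abs _).trans (hle x (Ioo_subset_Icc_self hx))
    simp only [Pi.neg_apply] at this
    linarith

lemma hasDerivAt_arctan_sub_div (p q x : ℝ) :
    HasDerivAt (fun x => Real.arctan ((x - p) / q)) (q / ((x - p) ^ 2 + q ^ 2)) x := by
  refine (((hasDerivAt_id x).sub_const p).div_const q).arctan.congr_deriv ?_
  rcases eq_or_ne q 0 with rfl | hq
  · simp
  · have : (x - p) ^ 2 + q ^ 2 ≠ 0 := by positivity
    have : 1 + ((x - p) / q) ^ 2 ≠ 0 := by positivity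
    simp only [id]
    field_simp
    ring

lemma abs_im_inv_sub (x : ℝ) (ξ : ℂ) :
    |((x - ξ : ℂ)⁻¹).im| = |ξ.im| / ((x - ξ.re) ^ 2 + |ξ.im| ^ 2) := by
  rw [Complex.inv_im, abs_div, abs_of_nonneg (Complex.normSq_nonneg _), Complex.normSq_apply]
  simp [sq]

lemma integrable_comp_abs {F : ℝ → ℝ} (hF : IntegrableOn F (Ioi 0)) :
    Integrable fun x => F |x| := by
  have hpos : IntegrableOn (fun x => F |x|) (Ioi 0) :=
    hF.congr_fun (fun x hx => by rw [abs_of_pos (by exact hx)]) measurableSet_Ioi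
  have hneg : IntegrableOn (fun x => F |x|) (Iic 0) := by
    rw [← Measure.map_neg_eq_self (volume : Measure ℝ)]
    let m : MeasurableEmbedding fun x : ℝ => -x := (Homeomorph.neg ℝ).measurableEmbedding
    rw [m.integrableOn_map_iff]
    simp_rw [Function.comp_def, abs_neg, neg_preimage, neg_Iic, neg_zero]
    exact Iff.mpr integrableOn_Ici_iff_integrableOn_Ioi hpos
  rw [← integrableOn_univ, ← Iic_union_Ioi (a := (0 : ℝ))]
  exact hneg.union hpos

/-- Comparison of the logarithmic derivative of `f` with that of its tangent line, when `f` is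
smallest at the point of tangency. -/
lemma norm_logDeriv_sub_le {f f₀ g τ : ℂ} {x ω : ℝ} (hx : x ≠ 0) (hτ : ‖τ‖ = 1)
    (hmin : ‖f₀‖ ≤ ‖f‖) (hf : ‖f - (f₀ + x * τ)‖ ≤ ω * |x|) (hg : ‖g - τ‖ ≤ ω)
    (hω : ω ≤ 1 / 8) :
    ‖g / f - τ / (f₀ + x * τ)‖ ≤ 20 * (ω / |x|) := by
  have ht : 0 < |x| := abs_pos.2 hx
  have hω0 : 0 ≤ ω := (norm_nonneg _).trans hg
  set w : ℂ := f₀ + x * τ with hw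
  have hxτ : ‖(x : ℂ) * τ‖ = |x| := by simp [hτ]
  have hf4 : |x| / 4 + |x| / 8 ≤ ‖f‖ := by
    have h1 : ‖(x : ℂ) * τ‖ ≤ ‖f‖ + ‖f₀‖ + ‖f - w‖ := by
      have e : (x : ℂ) * τ = f - f₀ - (f - w) := by rw [hw]; ring
      rw [e]
      exact (norm_sub_le _ _).trans (add_le_add_left (norm_sub_le _ _) _)
    nlinarith
  have hw4 : |x| / 4 ≤ ‖w‖ := by
    have h1 : ‖f‖ ≤ ‖f - w‖ + ‖w‖ := by
      simpa using norm_add_le (f - w) w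
    nlinarith
  have hfpos : 0 < ‖f‖ := by linarith
  have hwpos : 0 < ‖w‖ := by linarith
  have hf0 : f ≠ 0 := norm_pos_iff.1 hfpos
  have hw0 : w ≠ 0 := norm_pos_iff.1 hwpos
  have e : g / f - τ / w = (g - τ) / f - τ * (f - w) / (f * w) := by
    field_simp
    ring
  rw [e]
  have h1 : ‖(g - τ) / f‖ ≤ 4 * (ω / |x|) := by
    rw [norm_div]
    calc ‖g - τ‖ / ‖f‖ ≤ ω / (|x| / 4) := by gcongr; linarith
      _ = 4 * (ω / |x|) := by field_simp
  have h2 : ‖τ * (f - w) / (f * w)‖ ≤ 16 * (ω / |x|) := by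
    rw [norm_div, norm_mul, norm_mul, hτ, one_mul]
    calc ‖f - w‖ / (‖f‖ * ‖w‖) ≤ ω * |x| / (|x| / 4 * (|x| / 4)) := by gcongr; linarith
      _ = 16 * (ω / |x|) := by field_simp; norm_num
  linarith [norm_sub_le ((g - τ) / f) (τ * (f - w) / (f * w))]

/-- Let `z : [a,b] → ℂ` be an arc-length parametrization of a Dini-smooth
Jordan arc `γ`. For every `ε > 0` there exists `δ > 0` such that for every `ζ ∈ ℂ ∖ γ` and
every interval `I = [c, d] ⊆ [a, b]` of length `< δ`, every continuous branch `A` of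
`s ↦ arg (z(s) − ζ)` on `I` has total variation over `I` at most `π + ε`. -/
theorem argument_variation_away_from_arc
    (z z' : ℝ → ℂ) (a b : ℝ)
    (harc : IsDiniSmoothArc z z' a b)
    (hunit : ∀ s ∈ Set.Icc a b, ‖z' s‖ = 1) :
    ∀ ε : ℝ, 0 < ε → ∃ δ : ℝ, 0 < δ ∧
      ∀ ζ : ℂ, ζ ∉ z '' Set.Icc a b →
        ∀ c d : ℝ, Set.Icc c d ⊆ Set.Icc a b → d - c < δ →
          ∀ A : ℝ → ℝ, ContinuousOn A (Set.Icc c d) →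
            (∀ s ∈ Set.Icc c d,
              Complex.exp (Complex.I * (A s : ℂ)) = (z s - ζ) / ((‖z s - ζ‖ : ℝ) : ℂ)) →
            eVariationOn A (Set.Icc c d) ≤ ENNReal.ofReal (Real.pi + ε) := by
  intro ε hε
  have hK : ∀ s ∈ Icc a b, ‖z' s‖ ≤ 1 := fun s hs => (hunit s hs).le
  obtain ⟨δ₁, hδ₁, hmod⟩ := exists_modCont_le harc.cont (η := 1 / 8) (by norm_num)
  obtain ⟨δ, hδ, hδ1, hδδ₁, hint⟩ : ∃ δ : ℝ, 0 < δ ∧ δ ≤ 1 ∧ δ ≤ δ₁ ∧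
      ∫ t in Ioc 0 δ, modCont z' a b t / t < ε / 40 := by
    have hdini : IntegrableOn (fun t => modCont z' a b t / t) (Icc 0 1) :=
      Iff.mpr integrableOn_Icc_iff_integrableOn_Ioc harc.dini
    have hcont := intervalIntegral.continuousOn_primitive hdini 0 (by simp)
    have hev := (hcont.mono Ioc_subset_Icc_self).eventually_lt_const
      (u := ε / 40) (by simpa using hε)
    rw [nhdsWithin_Ioc_eq_nhdsGT one_pos] at hev
    obtain ⟨δ, h1, h2⟩ := (hev.and (Ioc_mem_nhdsGT (lt_min one_pos hδ₁))).exists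
    exact ⟨δ, h2.1, h2.2.trans (min_le_left _ _), h2.2.trans (min_le_right _ _), h1⟩
  refine ⟨δ, hδ, fun ζ hζ c d hI hlen A hA hexp => ?_⟩
  rcases lt_or_ge d c with hdc | hcd
  · simp [Icc_eq_empty_of_lt hdc]
  have hz : ∀ s ∈ Icc c d, HasDerivWithinAt z (z' s) (Icc c d) s := fun s hs =>
    (harc.deriv s (hI hs)).mono hI
  have hne : ∀ s ∈ Icc c d, z s - ζ ≠ 0 := fun s hs h =>
    hζ ⟨s, hI hs, sub_eq_zero.1 h⟩
  obtain ⟨s₀, hs₀, hmin⟩ := isCompact_Icc.exists_isMinOn (nonempty_Icc.2 hcd)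
    (f := fun s => ‖z s - ζ‖)
    (fun s hs => ((hz s hs).continuousWithinAt.sub continuousWithinAt_const).norm)
  have hτ := hunit s₀ (hI hs₀)
  have hτ0 : z' s₀ ≠ 0 := harc.nonzero s₀ (hI hs₀)
  set ξ : ℂ := s₀ - (z s₀ - ζ) / z' s₀ with hξ
  set F : ℝ → ℝ := (Ioc 0 δ).indicator fun t => modCont z' a b t / t with hF
  have hF0 : ∀ t, 0 ≤ F t := indicator_nonneg fun t ht =>
    div_nonneg (modCont_nonneg _ _ _ _) ht.1.le
  have hFint : Integrable F :=
    (harc.dini.mono_set (Ioc_subset_Ioc_right hδ1)).integrable_indicator measurableSet_Ioc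
  have hG : Integrable fun s => F |s - s₀| :=
    (integrable_comp_abs hFint.integrableOn).comp_sub_right s₀
  have hGint : ∫ s, F |s - s₀| < ε / 20 := by
    rw [integral_sub_right_eq_self (fun s => F |s|), integral_comp_abs, hF,
      setIntegral_indicator measurableSet_Ioc, inter_eq_right.2 Ioc_subset_Ioi_self]
    linarith
  set m : ℝ → ℝ := fun s => |ξ.im| / ((s - ξ.re) ^ 2 + |ξ.im| ^ 2) with hm
  have hbound : ∀ s ∈ Icc c d, |(z' s / (z s - ζ)).im| ≤ m s + 20 * F |s - s₀| := by
    intro s hs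
    have hline : z' s₀ / (z s₀ - ζ + (s - s₀ : ℝ) * z' s₀) = ((s : ℂ) - ξ)⁻¹ := by
      rw [← inv_div, hξ]
      congr 1
      push_cast
      field_simp
      ring
    have hdiff : ‖z' s / (z s - ζ) - ((s : ℂ) - ξ)⁻¹‖ ≤ 20 * F |s - s₀| := by
      rw [← hline]
      rcases eq_or_ne s s₀ with rfl | hss
      · simp [hF0]
      have hx : s - s₀ ≠ 0 := sub_ne_zero.2 hss
      have hsd : |s - s₀| ≤ δ := (abs_sub_le_of_le_of_le hs.1 hs.2 hs₀.1 hs₀.2).trans hlen.le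
      have hFs : F |s - s₀| = modCont z' a b |s - s₀| / |s - s₀| :=
        indicator_of_mem (s := Ioc 0 δ) ⟨abs_pos.2 hx, hsd⟩ _
      rw [hFs]
      refine norm_logDeriv_sub_le hx hτ (hmin hs) ?_
        (norm_sub_le_modCont hK (hI hs) (hI hs₀) le_rfl) (hmod _ (hsd.trans hδδ₁))
      convert norm_taylor_le_modCont harc.deriv hK (hI hs₀) (hI hs) using 2
      ring
    have h1 := (Complex.abs_im_le_norm _).trans hdiff
    rw [Complex.sub_im] at h1
    have h2 : |(((s : ℂ) - ξ)⁻¹).im| = m s := abs_im_inv_sub s ξ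
    linarith [abs_sub_abs_le_abs_sub (z' s / (z s - ζ)).im (((s : ℂ) - ξ)⁻¹).im]
  have hmd : ∀ s, HasDerivAt (fun s => Real.arctan ((s - ξ.re) / |ξ.im|)) (m s) s :=
    hasDerivAt_arctan_sub_div ξ.re |ξ.im|
  have hmi : ∀ x y, IntervalIntegrable m volume x y := by
    intro x y
    refine (intervalIntegral.intervalIntegrable_deriv_of_nonneg (g := fun s =>
      Real.arctan ((s - ξ.re) / |ξ.im|)) (fun s _ => (hmd s).continuousAt.continuousWithinAt)
      (fun s _ => hmd s) fun s _ => by positivity)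
  have hGi : ∀ x y, IntervalIntegrable (fun s => 20 * F |s - s₀|) volume x y := fun x y =>
    (hG.const_mul 20).intervalIntegrable
  have hvar : eVariationOn A (Icc c d) ≤ _ := eVariationOn_le_of_abs_sub_le
    (M := fun x => ∫ s in c..x, (m s + 20 * F |s - s₀|)) hcd ?_
  · refine hvar.trans (ENNReal.ofReal_le_ofReal ?_)
    simp only [intervalIntegral.integral_same, sub_zero]
    rw [intervalIntegral.integral_add (hmi c d) (hGi c d),
      intervalIntegral.integral_eq_sub_of_hasDerivAt (fun s _ => hmd s) (hmi c d),
      intervalIntegral.integral_const_mul, intervalIntegral.integral_of_le hcd]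
    have h1 : ∫ s in Ioc c d, F |s - s₀| ≤ ∫ s, F |s - s₀| :=
      setIntegral_le_integral hG (Eventually.of_forall fun s => hF0 _)
    linarith [Real.arctan_lt_pi_div_two ((d - ξ.re) / |ξ.im|),
      Real.neg_pi_div_two_lt_arctan ((c - ξ.re) / |ξ.im|)]
  · intro x hx y hy hxy
    rw [intervalIntegral.integral_interval_sub_left ((hmi c y).add (hGi c y))
      ((hmi c x).add (hGi c x))]
    have hsub : Icc x y ⊆ Icc c d := Icc_subset_Icc hx.1 hy.2
    refine abs_sub_le_integral_of_hasDerivWithinAt hxy (fun s hs => ?_)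
      ((intervalIntegrable_iff_integrableOn_Icc_of_le hxy).1 ((hmi x y).add (hGi x y)))
      fun s hs => hbound s (hsub hs)
    exact (hasDerivWithinAt_of_exp_eq ((hz s (hsub hs)).sub_const ζ) hne (hsub hs)
      (hA s (hsub hs)) hexp).mono hsub

end
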